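/- Let a > 0, b ≥ 0 with a + 2b ≥ 1, a + b < 1, and (1 + √(1-4ab))/(2a) > 2. Then the minimal cost of the serial two-spring optimization problem (which is 2) is strictly less than the minimal cost of the parallel problem (which is (1+√(1-4ab))/(2a)). -/

import Mathlib

/-- The larger root of `a x² - x + b` is a root when the discriminant is nonnegative. -/
theorem larger_root_eq_zero {a b : ℝ} (ha : a ≠ 0) (hd : 0 ≤ 1 - 4 * a * b) :
    a * ((1 + Real.sqrt (1 - 4 * a * b)) / (2 * a)) ^ 2
      - (1 + Real.sqrt (1 - 4 * a * b)) / (2 * a) + b = 0 := by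
  have hs := Real.sq_sqrt hd
  generalize Real.sqrt (1 - 4 * a * b) = s at hs ⊢
  field_simp
  linarith

/-- If `a x² - x + b` is negative at `1` and vanishes at `r > 1`, it is negative on `[1, r)`. -/
theorem le_of_quadratic_nonneg {a b r c : ℝ} (ha : 0 < a) (h2 : a + b < 1) (hr : 1 < r)
    (hroot : a * r ^ 2 - r + b = 0) (hc : 1 ≤ c) (hq : 0 ≤ a * c ^ 2 - c + b) : r ≤ c := by
  by_contra! hlt
  have hconv : (r - 1) * (a * c ^ 2 - c + b) = (r - c) * (a + b - 1)
      + (c - 1) * (a * r ^ 2 - r + b) - a * (c - 1) * (r - c) * (r - 1) := by ring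
  have hpos : 0 ≤ a * (c - 1) * (r - c) * (r - 1) :=
    mul_nonneg (mul_nonneg (mul_nonneg ha.le (by linarith)) (by linarith)) (by linarith)
  have hneg : (r - c) * (a + b - 1) < 0 := mul_neg_of_pos_of_neg (by linarith) (by linarith)
  have hleft : 0 ≤ (r - 1) * (a * c ^ 2 - c + b) := mul_nonneg (by linarith) hq
  rw [hroot] at hconv
  linarith

/-- For `c > 0`, the rational constraint is equivalent to a quadratic one. -/
theorem one_le_mul_add_div_iff {a b c : ℝ} (hc : 0 < c) :
    1 ≤ a * c + b / c ↔ 0 ≤ a * c ^ 2 - c + b := by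
  have h : a * c + b / c = (a * c ^ 2 + b) / c := by field_simp
  rw [h, le_div_iff₀ hc]
  constructor <;> intro h <;> linarith

theorem stmt_16 (a b : ℝ) (ha : 0 < a) (hb : 0 ≤ b)
    (h1 : a + 2 * b ≥ 1) (h2 : a + b < 1)
    (h3 : (1 + Real.sqrt (1 - 4 * a * b)) / (2 * a) > 2) :
    IsLeast {y : ℝ | ∃ c₁ c₂ : ℝ, 0 < c₁ ∧ 0 < c₂ ∧
        a * min c₁ c₂ + b * (1 / c₁ + 1 / c₂) ≥ 1 ∧ min c₁ c₂ ≥ 1 ∧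
        y = c₁ + c₂} 2 ∧
      IsLeast {y : ℝ | ∃ c₁ c₂ : ℝ, 0 ≤ c₁ ∧ 0 ≤ c₂ ∧
        a * (c₁ + c₂) + b / (c₁ + c₂) ≥ 1 ∧ c₁ + c₂ ≥ 1 ∧ y = c₁ + c₂}
        ((1 + Real.sqrt (1 - 4 * a * b)) / (2 * a)) ∧
      (2 : ℝ) < (1 + Real.sqrt (1 - 4 * a * b)) / (2 * a) := by
  have hd : 0 ≤ 1 - 4 * a * b := by nlinarith [sq_nonneg (a - b)]
  have hroot := larger_root_eq_zero ha.ne' hd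
  refine ⟨⟨⟨1, 1, by norm_num, by norm_num, ?_, by norm_num, by norm_num⟩, ?_⟩,
    ⟨?_, ?_⟩, h3⟩
  · norm_num
    linarith
  · rintro y ⟨c₁, c₂, -, -, -, hmin, rfl⟩
    linarith [min_le_left c₁ c₂, min_le_right c₁ c₂]
  · generalize (1 + Real.sqrt (1 - 4 * a * b)) / (2 * a) = r at *
    refine ⟨r, 0, by linarith, le_rfl, ?_, by linarith, by ring⟩
    rw [add_zero]
    exact (one_le_mul_add_div_iff (by linarith)).2 hroot.ge
  · rintro y ⟨c₁, c₂, -, -, hc, hone, rfl⟩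
    exact le_of_quadratic_nonneg ha h2 (by linarith) hroot hone
      ((one_le_mul_add_div_iff (by linarith)).1 hc)
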